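/- Turán's theorem (Hardy–Ramanujan): (1/N)·#{n ≤ N : |ω(n) − log log N| ≥ t·√(log log N)} ≤ (1 + O(1/√(log log N)))/t² for every t ≥ 1, with implied constant independent of t. -/

import Mathlib

open Finset

/-!
This is Turán's second-moment argument. Writing `ω(n)` as a sum over primes `p ≤ N` of the indicator
of `p ∣ n`, the first two power sums of `ω` on `[1, N]` are `∑ₚ ⌊N / p⌋` and
`∑ₚ ∑_q ⌊N / lcm(p, q)⌋`. In `∑ₙ (ω(n) - log log N)²` the terms `p ≠ q` then cancel against the
mean up to `O(N)`, leaving the diagonal `∑ₚ N / p`, which is `N (log log N + O(1))` by Mertens'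
second theorem. The error from dropping floor brackets is at most `2 π(N) log log N = O(N)` by
Chebyshev's bound. Chebyshev's inequality then gives the tail bound.

Mertens' estimate for `∑ 1 / p` follows by partial summation from the one for `∑ (log p) / p`, which
in turn is read off from the prime factorization of `N!`.
-/

open Real
open scoped Nat

section Legendre

lemma cast_div_sub_one_lt (m n : ℕ) : (m : ℝ) / n - 1 < (m / n : ℕ) := by
  rw [← Nat.floor_div_eq_div (K := ℝ)]
  exact Nat.sub_one_lt_floor _

lemma log_factorial_eq_sum_primesLE (N : ℕ) :
    log N ! = ∑ p ∈ Nat.primesLE N, ((N !).factorization p : ℝ) * log p := by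
  rw [log_nat_eq_sum_factorization]
  refine Finsupp.sum_of_support_subset _ (fun p hp ↦ ?_) _ (by simp)
  have hp : p ∈ (N !).primeFactors := Nat.support_factorization _ ▸ hp
  have hprime := Nat.prime_of_mem_primeFactors hp
  exact Nat.mem_primesLE.2 ⟨hprime.dvd_factorial.1 (Nat.dvd_of_mem_primeFactors hp), hprime⟩

lemma div_le_factorization_factorial {p : ℕ} (hp : p.Prime) (N : ℕ) :
    N / p ≤ (N !).factorization p := by
  have hdvd : (p * (N / p))! ∣ N ! := Nat.factorial_dvd_factorial (Nat.mul_div_le N p)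
  calc N / p ≤ ((p * (N / p))!).factorization p := by
        rw [Nat.factorization_factorial_mul hp]
        exact Nat.le_add_left _ _
    _ ≤ (N !).factorization p :=
        (Nat.factorization_le_iff_dvd (Nat.factorial_ne_zero _) (Nat.factorial_ne_zero _)).2 hdvd p

lemma factorization_factorial_le_div_add {p : ℕ} (hp : p.Prime) (N : ℕ) :
    ((N !).factorization p : ℝ) ≤ N / p + N / (p * (p - 1)) := by
  have hp0 : (p : ℝ) ≠ 0 := mod_cast hp.ne_zero
  have hp1 : (p : ℝ) - 1 ≠ 0 := sub_ne_zero.2 (mod_cast hp.one_lt.ne')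
  calc ((N !).factorization p : ℝ) ≤ (N / (p - 1) : ℕ) :=
        mod_cast Nat.factorization_factorial_le_div_pred hp N
    _ ≤ N / (p - 1 : ℕ) := Nat.cast_div_le
    _ = N / p + N / (p * (p - 1)) := by
        rw [Nat.cast_pred hp.pos]
        field_simp
        ring

end Legendre

section MertensFirst

/-- The sum `∑_{p ≤ N} (log p) / p` over primes, which Mertens' first theorem compares
with `log N`. -/
noncomputable def primeLogSum (N : ℕ) : ℝ := ∑ p ∈ Nat.primesLE N, log p / p

lemma log_add_one_sub_log_le {x : ℝ} (hx : 0 < x) : log (x + 1) - log x ≤ 1 / x := by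
  rw [← log_div (by positivity) hx.ne']
  calc log ((x + 1) / x) ≤ (x + 1) / x - 1 := log_le_sub_one_of_pos (by positivity)
    _ = 1 / x := by field_simp; ring

lemma log_add_one_div_mul_le {x : ℝ} (hx : 1 ≤ x) :
    log (x + 1) / ((x + 1) * x) ≤ (log x + 2) / x - (log (x + 1) + 2) / (x + 1) := by
  have hx0 : 0 < x := by linarith
  have hlog : log (x + 1) - log x ≤ 1 / x := log_add_one_sub_log_le hx0
  have hlog_one : log (x + 1) - log x ≤ 1 := hlog.trans ((div_le_one hx0).2 hx)
  have hlog_mul : (log (x + 1) - log x) * x ≤ 1 := (le_div_iff₀ hx0).1 hlog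
  rw [div_sub_div _ _ (by positivity) (by positivity), mul_comm (x + 1) x]
  gcongr
  linarith

lemma sum_log_div_mul_sub_one_le {N : ℕ} (hN : 1 ≤ N) :
    ∑ n ∈ Icc 2 N, log n / (n * (n - 1)) ≤ 2 - (log N + 2) / N := by
  induction N, hN using Nat.le_induction with
  | base => simp
  | succ n hn ih =>
    have hstep := log_add_one_div_mul_le (x := n) (mod_cast hn)
    rw [sum_Icc_succ_top (by lia)]
    push_cast
    rw [add_sub_cancel_right]
    linarith

lemma sum_primesLE_log_div_mul_sub_one_le (N : ℕ) :
    ∑ p ∈ Nat.primesLE N, log p / (p * (p - 1)) ≤ 2 := by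
  rcases N.eq_zero_or_pos with rfl | hN
  · simp
  have hnonneg : ∀ n ∈ Icc 2 N, 0 ≤ log n / (n * (n - 1)) := fun n hn ↦ by
    have hn1 : (0 : ℝ) ≤ n - 1 := sub_nonneg.2 (mod_cast (mem_Icc.1 hn).1.trans' one_le_two)
    positivity
  calc ∑ p ∈ Nat.primesLE N, log p / (p * (p - 1))
      ≤ ∑ n ∈ Icc 2 N, log n / (n * (n - 1)) := by
        refine sum_le_sum_of_subset_of_nonneg ?_ fun n hn _ ↦ hnonneg n hn
        rw [Nat.primesLE_eq_filter_Icc_two]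
        exact filter_subset _ _
    _ ≤ 2 - (log N + 2) / N := sum_log_div_mul_sub_one_le hN
    _ ≤ 2 := sub_le_self _ (by positivity)

lemma mul_primeLogSum_sub_theta_le_log_factorial (N : ℕ) :
    N * primeLogSum N - Chebyshev.theta N ≤ log N ! := by
  rw [log_factorial_eq_sum_primesLE, Chebyshev.theta_eq_sum_primesLE_log, primeLogSum, mul_sum,
    ← sum_sub_distrib]
  refine sum_le_sum fun p hp ↦ ?_
  have hdiv : (N : ℝ) / p - 1 ≤ (N !).factorization p :=
    (cast_div_sub_one_lt N p).le.trans
      (mod_cast div_le_factorization_factorial (Nat.prime_of_mem_primesLE hp) N)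
  calc N * (log p / p) - log p = (N / p - 1) * log p := by ring
    _ ≤ (N !).factorization p * log p := by gcongr

lemma log_factorial_le_mul_primeLogSum_add (N : ℕ) :
    log N ! ≤ N * (primeLogSum N + 2) := by
  calc log N ! = ∑ p ∈ Nat.primesLE N, ((N !).factorization p : ℝ) * log p :=
        log_factorial_eq_sum_primesLE N
    _ ≤ ∑ p ∈ Nat.primesLE N, (N / p + N / (p * (p - 1)) : ℝ) * log p := by
        gcongr with p hp
        exact factorization_factorial_le_div_add (Nat.prime_of_mem_primesLE hp) N
    _ = N * (primeLogSum N + ∑ p ∈ Nat.primesLE N, log p / (p * (p - 1))) := by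
        rw [primeLogSum, ← sum_add_distrib, mul_sum]
        exact sum_congr rfl fun p _ ↦ by ring
    _ ≤ N * (primeLogSum N + 2) := by
        gcongr
        exact sum_primesLE_log_div_mul_sub_one_le N

lemma primeLogSum_le {N : ℕ} (hN : N ≠ 0) : primeLogSum N ≤ log N + log 4 := by
  have hfactorial : log N ! ≤ N * log N := by
    rw [← log_pow]
    exact log_le_log (mod_cast N.factorial_pos) (mod_cast N.factorial_le_pow)
  have htheta : Chebyshev.theta N ≤ log 4 * N := Chebyshev.theta_le_log4_mul_x N.cast_nonneg
  have hN0 : (0 : ℝ) < N := mod_cast hN.bot_lt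
  refine le_of_mul_le_mul_left ?_ hN0
  linarith [mul_primeLogSum_sub_theta_le_log_factorial N]

lemma log_sub_three_le_primeLogSum {N : ℕ} (hN : N ≠ 0) : log N - 3 ≤ primeLogSum N := by
  have hfactorial : N * log N - N ≤ log N ! := by
    have hlog_two_pi : 0 ≤ log (2 * π) := log_nonneg (by linarith [pi_gt_three])
    linarith [Stirling.le_log_factorial_stirling hN, log_natCast_nonneg N]
  have hN0 : (0 : ℝ) < N := mod_cast hN.bot_lt
  refine le_of_mul_le_mul_left ?_ hN0
  linarith [log_factorial_le_mul_primeLogSum_add N]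

lemma log_four_le_two : log 4 ≤ 2 := by
  rw [show (4 : ℝ) = 2 ^ 2 by norm_num, log_pow]
  push_cast
  linarith [log_two_lt_d9]

theorem abs_primeLogSum_sub_log_le {N : ℕ} (hN : N ≠ 0) : |primeLogSum N - log N| ≤ 3 :=
  abs_le.2 ⟨by linarith [log_sub_three_le_primeLogSum hN],
    by linarith [primeLogSum_le hN, log_four_le_two]⟩

end MertensFirst

section MertensSecond

/-- The sum `∑_{p ≤ N} 1 / p` over primes, which Mertens' second theorem compares
with `log log N`. -/
noncomputable def primeReciprocalSum (N : ℕ) : ℝ := ∑ p ∈ Nat.primesLE N, 1 / (p : ℝ)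

lemma sum_primesLE_succ_sub {M : Type*} [AddCommGroup M] (f : ℕ → M) (n : ℕ) :
    ∑ p ∈ Nat.primesLE (n + 1), f p - ∑ p ∈ Nat.primesLE n, f p =
      if (n + 1).Prime then f (n + 1) else 0 := by
  simp only [Nat.primesLE_eq_filter_Icc_zero, sum_filter]
  rw [sum_Icc_succ_top (Nat.zero_le _), add_sub_cancel_left]

lemma primeReciprocalSum_succ_sub (n : ℕ) :
    primeReciprocalSum (n + 1) - primeReciprocalSum n =
      (log (n + 1 : ℕ))⁻¹ * (primeLogSum (n + 1) - primeLogSum n) := by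
  simp only [primeReciprocalSum, primeLogSum, sum_primesLE_succ_sub]
  split_ifs with hp
  · have hlog : log (n + 1 : ℕ) ≠ 0 := (log_pos (mod_cast hp.one_lt)).ne'
    field_simp
  · rw [mul_zero]

lemma sum_Ico_mul_sub_by_parts {R : Type*} [Ring R] {a b : ℕ} (hab : a ≤ b) (g E : ℕ → R) :
    ∑ n ∈ Ico a b, g (n + 1) * (E (n + 1) - E n) =
      g b * E b - g a * E a + ∑ n ∈ Ico a b, (g n - g (n + 1)) * E n := by
  rw [← sum_Ico_sub (fun n ↦ g n * E n) hab, ← sum_add_distrib]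
  exact sum_congr rfl fun n _ ↦ by noncomm_ring

lemma abs_sum_Ico_mul_sub_le {g E : ℕ → ℝ} {a b : ℕ} {B : ℝ} (hab : a ≤ b)
    (hg : AntitoneOn g (Set.Icc a b)) (hgb : 0 ≤ g b) (hE : ∀ n ∈ Set.Icc a b, |E n| ≤ B) :
    |∑ n ∈ Ico a b, g (n + 1) * (E (n + 1) - E n)| ≤ 2 * B * g a := by
  have hga : 0 ≤ g a := hgb.trans (hg ⟨le_rfl, hab⟩ ⟨hab, le_rfl⟩ hab)
  have hsum : |∑ n ∈ Ico a b, (g n - g (n + 1)) * E n| ≤ (g a - g b) * B := by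
    calc |∑ n ∈ Ico a b, (g n - g (n + 1)) * E n|
        ≤ ∑ n ∈ Ico a b, |(g n - g (n + 1)) * E n| := abs_sum_le_sum_abs _ _
      _ ≤ ∑ n ∈ Ico a b, (g n - g (n + 1)) * B := by
          refine sum_le_sum fun n hn ↦ ?_
          obtain ⟨han, hnb⟩ := mem_Ico.1 hn
          have hdrop : 0 ≤ g n - g (n + 1) :=
            sub_nonneg.2 (hg ⟨han, hnb.le⟩ ⟨by lia, hnb⟩ n.le_succ)
          rw [abs_mul, abs_of_nonneg hdrop]
          exact mul_le_mul_of_nonneg_left (hE n ⟨han, hnb.le⟩) hdrop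
      _ = (g a - g b) * B := by
          rw [← sum_mul, ← neg_sub (g b), ← sum_Ico_sub g hab, ← sum_neg_distrib]
          simp only [neg_sub]
  have hEa : |g a * E a| ≤ g a * B := by
    rw [abs_mul, abs_of_nonneg hga]
    exact mul_le_mul_of_nonneg_left (hE a ⟨le_rfl, hab⟩) hga
  have hEb : |g b * E b| ≤ g b * B := by
    rw [abs_mul, abs_of_nonneg hgb]
    exact mul_le_mul_of_nonneg_left (hE b ⟨hab, le_rfl⟩) hgb
  rw [sum_Ico_mul_sub_by_parts hab]
  linarith [abs_add_le (g b * E b - g a * E a) (∑ n ∈ Ico a b, (g n - g (n + 1)) * E n),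
    abs_sub (g b * E b) (g a * E a)]

lemma abs_log_sub_log_sub_inv_mul_le {u v : ℝ} (hu : 0 < u) (hv : 0 < v) :
    |log v - log u - v⁻¹ * (v - u)| ≤ (v - u) * (u⁻¹ - v⁻¹) := by
  have hlower : v⁻¹ * (v - u) ≤ log v - log u := by
    rw [← log_div hv.ne' hu.ne']
    calc v⁻¹ * (v - u) = 1 - (v / u)⁻¹ := by field_simp
      _ ≤ log (v / u) := one_sub_inv_le_log_of_pos (by positivity)
  have hupper : log v - log u ≤ u⁻¹ * (v - u) := by
    rw [← log_div hv.ne' hu.ne']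
    calc log (v / u) ≤ v / u - 1 := log_le_sub_one_of_pos (by positivity)
      _ = u⁻¹ * (v - u) := by field_simp
  rw [abs_of_nonneg (sub_nonneg.2 hlower)]
  linarith

lemma antitoneOn_inv_log : AntitoneOn (fun n : ℕ ↦ (log n)⁻¹) (Set.Ici 2) := by
  intro m hm n _ hmn
  have hm : 2 ≤ m := hm
  have hlog : 0 < log m := log_pos (mod_cast hm)
  dsimp only
  gcongr

lemma abs_log_log_succ_sub_le {n : ℕ} (hn : 2 ≤ n) :
    |log (log (n + 1 : ℕ)) - log (log n) - (log (n + 1 : ℕ))⁻¹ * (log (n + 1 : ℕ) - log n)| ≤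
      (log n)⁻¹ - (log (n + 1 : ℕ))⁻¹ := by
  have hn0 : (0 : ℝ) < n := by positivity
  have hlog : 0 < log n := log_pos (mod_cast hn)
  have hlog_succ : 0 < log (n + 1 : ℕ) := log_pos (mod_cast (by lia))
  have hinv : 0 ≤ (log n)⁻¹ - (log (n + 1 : ℕ))⁻¹ :=
    sub_nonneg.2 (antitoneOn_inv_log hn (hn.trans n.le_succ) n.le_succ)
  have hdiff : log (n + 1 : ℕ) - log n ≤ 1 := by
    push_cast
    exact (log_add_one_sub_log_le hn0).trans ((div_le_one hn0).2 (mod_cast one_le_two.trans hn))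
  exact (abs_log_sub_log_sub_inv_mul_le hlog hlog_succ).trans
    (mul_le_of_le_one_left hinv hdiff)

lemma abs_sum_log_log_succ_sub_le {N : ℕ} (hN : 2 ≤ N) :
    |∑ n ∈ Ico 2 N, (log (log (n + 1 : ℕ)) - log (log n) -
      (log (n + 1 : ℕ))⁻¹ * (log (n + 1 : ℕ) - log n))| ≤ (log 2)⁻¹ := by
  calc _ ≤ ∑ n ∈ Ico 2 N, ((log n)⁻¹ - (log (n + 1 : ℕ))⁻¹) :=
        (abs_sum_le_sum_abs _ _).trans
          (sum_le_sum fun n hn ↦ abs_log_log_succ_sub_le (mem_Ico.1 hn).1)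
    _ = (log 2)⁻¹ - (log N)⁻¹ := by
        have htelescope := sum_Ico_sub (fun n : ℕ ↦ -(log n)⁻¹) hN
        simp only [neg_sub_neg, Nat.cast_ofNat] at htelescope
        exact htelescope
    _ ≤ (log 2)⁻¹ := sub_le_self _ (inv_nonneg.2 (log_natCast_nonneg N))

lemma primeReciprocalSum_sub_log_log_eq {N : ℕ} (hN : 2 ≤ N) :
    primeReciprocalSum N - log (log N) = primeReciprocalSum 2 - log (log 2) +
      ∑ n ∈ Ico 2 N, (log (n + 1 : ℕ))⁻¹ *
        ((primeLogSum (n + 1) - log (n + 1 : ℕ)) - (primeLogSum n - log n)) -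
      ∑ n ∈ Ico 2 N, (log (log (n + 1 : ℕ)) - log (log n) -
        (log (n + 1 : ℕ))⁻¹ * (log (n + 1 : ℕ) - log n)) := by
  have htelescope := sum_Ico_sub (fun n : ℕ ↦ primeReciprocalSum n - log (log n)) hN
  rw [add_sub_assoc, ← sum_sub_distrib, ← sub_eq_iff_eq_add']
  refine htelescope.symm.trans (sum_congr rfl fun n _ ↦ ?_)
  linear_combination primeReciprocalSum_succ_sub n

theorem exists_abs_primeReciprocalSum_sub_log_log_le :
    ∃ c : ℝ, ∀ N : ℕ, 2 ≤ N → |primeReciprocalSum N - log (log N)| ≤ c := by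
  refine ⟨|primeReciprocalSum 2 - log (log 2)| + 2 * 3 * (log 2)⁻¹ + (log 2)⁻¹, fun N hN ↦ ?_⟩
  rw [primeReciprocalSum_sub_log_log_eq hN]
  have hparts := abs_sum_Ico_mul_sub_le (g := fun n ↦ (log n)⁻¹)
    (E := fun n ↦ primeLogSum n - log n) hN (antitoneOn_inv_log.mono fun n hn ↦ hn.1)
    (inv_nonneg.2 (log_natCast_nonneg N))
    fun n hn ↦ abs_primeLogSum_sub_log_le (two_pos.trans_le hn.1).ne'
  exact (abs_sub _ _).trans (add_le_add ((abs_add_le _ _).trans (add_le_add_right hparts _))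
    (abs_sum_log_log_succ_sub_le hN))

end MertensSecond

section Moments

lemma log_mul_primeCounting_le {N : ℕ} (hN : 1 < N) : log N * Nat.primeCounting N ≤ 6 * N := by
  have hlog : 0 < log N := log_pos (mod_cast hN)
  have hprimes := Chebyshev.pi_le_log4_mul_div (x := N) (mod_cast hN)
  rw [Nat.floor_natCast, log_sqrt N.cast_nonneg] at hprimes
  have hsqrt : log N * √N ≤ 2 * N := by
    have hlog_sqrt : log N ≤ 2 * √N := by
      linarith [log_sqrt N.cast_nonneg, log_le_self (sqrt_nonneg (N : ℝ))]
    calc log N * √N ≤ 2 * √N * √N := by gcongr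
      _ = 2 * N := by rw [mul_assoc, mul_self_sqrt N.cast_nonneg]
  calc log N * Nat.primeCounting N ≤ log N * (log 4 * N / (log N / 2) + √N) := by gcongr
    _ = 2 * log 4 * N + log N * √N := by field_simp
    _ ≤ 2 * 2 * N + 2 * N := by gcongr; exact log_four_le_two
    _ = 6 * N := by ring

lemma card_primeFactors_eq_sum_ite {N n : ℕ} (hn : n ∈ Icc 1 N) :
    (#n.primeFactors : ℝ) = ∑ p ∈ Nat.primesLE N, if p ∣ n then 1 else 0 := by
  obtain ⟨hpos, hle⟩ := mem_Icc.1 hn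
  have hfilter : n.primeFactors = {p ∈ Nat.primesLE N | p ∣ n} := by
    ext p
    simp only [Nat.mem_primeFactors, mem_filter, Nat.mem_primesLE]
    exact ⟨fun ⟨hp, hdvd, _⟩ ↦ ⟨⟨(Nat.le_of_dvd hpos hdvd).trans hle, hp⟩, hdvd⟩,
      fun ⟨⟨_, hp⟩, hdvd⟩ ↦ ⟨hp, hdvd, Nat.pos_iff_ne_zero.1 hpos⟩⟩
  rw [hfilter, sum_boole]

lemma sum_Icc_ite_dvd (N d : ℕ) :
    ∑ n ∈ Icc 1 N, (if d ∣ n then 1 else 0 : ℝ) = (N / d : ℕ) := by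
  rw [sum_boole, ← Nat.Ioc_filter_dvd_card_eq_div]
  rfl

lemma sum_card_primeFactors (N : ℕ) :
    ∑ n ∈ Icc 1 N, (#n.primeFactors : ℝ) = ∑ p ∈ Nat.primesLE N, ((N / p : ℕ) : ℝ) := by
  rw [sum_congr rfl fun n hn ↦ card_primeFactors_eq_sum_ite hn, sum_comm]
  exact sum_congr rfl fun p _ ↦ sum_Icc_ite_dvd N p

lemma sum_card_primeFactors_sq (N : ℕ) :
    ∑ n ∈ Icc 1 N, (#n.primeFactors : ℝ) ^ 2 =
      ∑ p ∈ Nat.primesLE N, ∑ q ∈ Nat.primesLE N, ((N / p.lcm q : ℕ) : ℝ) := by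
  calc ∑ n ∈ Icc 1 N, (#n.primeFactors : ℝ) ^ 2
      = ∑ n ∈ Icc 1 N, ∑ p ∈ Nat.primesLE N, ∑ q ∈ Nat.primesLE N,
          (if p.lcm q ∣ n then 1 else 0 : ℝ) := by
        refine sum_congr rfl fun n hn ↦ ?_
        rw [card_primeFactors_eq_sum_ite hn, sq, sum_mul_sum]
        simp only [Nat.lcm_dvd_iff, ite_and, ite_mul, one_mul, zero_mul]
    _ = ∑ p ∈ Nat.primesLE N, ∑ q ∈ Nat.primesLE N, ∑ n ∈ Icc 1 N,
          (if p.lcm q ∣ n then 1 else 0 : ℝ) := by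
        rw [sum_comm]
        exact sum_congr rfl fun p _ ↦ sum_comm
    _ = ∑ p ∈ Nat.primesLE N, ∑ q ∈ Nat.primesLE N, ((N / p.lcm q : ℕ) : ℝ) := by
        simp only [sum_Icc_ite_dvd]

lemma mul_primeReciprocalSum_sub_primeCounting_le (N : ℕ) :
    N * primeReciprocalSum N - Nat.primeCounting N ≤ ∑ n ∈ Icc 1 N, (#n.primeFactors : ℝ) := by
  rw [sum_card_primeFactors, primeReciprocalSum, mul_sum, ← Nat.primesLE_card_eq_primeCounting,
    card_eq_sum_ones, Nat.cast_sum, ← sum_sub_distrib]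
  refine sum_le_sum fun p _ ↦ ?_
  rw [mul_one_div, Nat.cast_one]
  exact (cast_div_sub_one_lt N p).le

lemma div_lcm_le_of_prime {p q : ℕ} (hp : p.Prime) (hq : q.Prime) (N : ℕ) :
    ((N / p.lcm q : ℕ) : ℝ) ≤
      N * (1 / p * (1 / q)) + if p = q then (N * (1 / p) : ℝ) else 0 := by
  refine Nat.cast_div_le.trans ?_
  split_ifs with hpq
  · subst hpq
    rw [Nat.lcm_self, div_eq_mul_one_div]
    exact le_add_of_nonneg_left (by positivity)
  · rw [((Nat.coprime_primes hp hq).2 hpq).lcm_eq_mul, Nat.cast_mul, add_zero,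
      one_div_mul_one_div, mul_one_div]

lemma sum_card_primeFactors_sq_le (N : ℕ) :
    ∑ n ∈ Icc 1 N, (#n.primeFactors : ℝ) ^ 2 ≤
      N * (primeReciprocalSum N ^ 2 + primeReciprocalSum N) := by
  calc ∑ n ∈ Icc 1 N, (#n.primeFactors : ℝ) ^ 2
      ≤ ∑ p ∈ Nat.primesLE N, ∑ q ∈ Nat.primesLE N,
          (N * (1 / p * (1 / q)) + if p = q then (N * (1 / p) : ℝ) else 0) := by
        rw [sum_card_primeFactors_sq]
        gcongr with p hp q hq
        exact div_lcm_le_of_prime (Nat.prime_of_mem_primesLE hp) (Nat.prime_of_mem_primesLE hq) N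
    _ = ∑ p ∈ Nat.primesLE N, ∑ q ∈ Nat.primesLE N, (N * (1 / p * (1 / q)) : ℝ) +
          ∑ p ∈ Nat.primesLE N, (N * (1 / p) : ℝ) := by
        simp only [sum_add_distrib]
        congr 1
        exact sum_congr rfl fun p hp ↦ by rw [sum_ite_eq, if_pos hp]
    _ = N * (primeReciprocalSum N ^ 2 + primeReciprocalSum N) := by
        rw [mul_add, primeReciprocalSum, sq, sum_mul_sum]
        simp only [mul_sum]

lemma sum_card_primeFactors_sub_sq_le (N : ℕ) {x : ℝ} (hx : 0 ≤ x) :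
    ∑ n ∈ Icc 1 N, ((#n.primeFactors : ℝ) - x) ^ 2 ≤
      N * ((primeReciprocalSum N - x) ^ 2 + primeReciprocalSum N) +
        2 * (x * Nat.primeCounting N) := by
  have hexpand : ∑ n ∈ Icc 1 N, ((#n.primeFactors : ℝ) - x) ^ 2 =
      ∑ n ∈ Icc 1 N, (#n.primeFactors : ℝ) ^ 2 -
        2 * x * ∑ n ∈ Icc 1 N, (#n.primeFactors : ℝ) + N * x ^ 2 := by
    simp only [sub_sq', sum_sub_distrib, sum_add_distrib, sum_const, Nat.card_Icc,
      add_tsub_cancel_right, nsmul_eq_mul, ← mul_sum, ← sum_mul]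
    ring
  have hmean := mul_le_mul_of_nonneg_left (mul_primeReciprocalSum_sub_primeCounting_le N) hx
  rw [hexpand]
  linarith [sum_card_primeFactors_sq_le N]

end Moments

lemma log_log_pos {x : ℝ} (hx : 3 ≤ x) : 0 < log (log x) :=
  log_pos ((lt_log_iff_exp_lt (by linarith)).2 (exp_one_lt_three.trans_le hx))

lemma one_le_log_log {x : ℝ} (hx : 16 ≤ x) : 1 ≤ log (log x) := by
  have hlog : exp 1 ≤ log x := by
    have hlog_sixteen : log 16 = 4 * log 2 := by
      rw [show (16 : ℝ) = 2 ^ 4 by norm_num, log_pow, Nat.cast_ofNat]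
    linarith [log_le_log (by norm_num) hx, log_two_gt_d9, exp_one_lt_d9]
  exact (le_log_iff_exp_le ((exp_pos 1).trans_le hlog)).2 hlog

theorem exists_sum_card_primeFactors_sub_log_log_sq_le :
    ∃ C : ℝ, 0 < C ∧ ∀ N : ℕ, 3 ≤ N →
      ∑ n ∈ Icc 1 N, ((#n.primeFactors : ℝ) - log (log N)) ^ 2 ≤ N * (log (log N) + C) := by
  obtain ⟨c, hc⟩ := exists_abs_primeReciprocalSum_sub_log_log_le
  have hc0 : 0 ≤ c := (abs_nonneg _).trans (hc 2 le_rfl)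
  refine ⟨c ^ 2 + c + 12, by positivity, fun N hN ↦ ?_⟩
  have hloglog : 0 ≤ log (log N) := (log_log_pos (mod_cast hN)).le
  have hmertens : |primeReciprocalSum N - log (log N)| ≤ c := hc N (by lia)
  have hsq : (primeReciprocalSum N - log (log N)) ^ 2 ≤ c ^ 2 :=
    sq_le_sq.2 (hmertens.trans (le_abs_self c))
  have hsum : primeReciprocalSum N ≤ log (log N) + c := by linarith [(abs_le.1 hmertens).2]
  have hprimes : log (log N) * Nat.primeCounting N ≤ 6 * N :=
    (mul_le_mul_of_nonneg_right (log_le_self (log_natCast_nonneg N)) (Nat.cast_nonneg _)).trans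
      (log_mul_primeCounting_le (by lia))
  calc ∑ n ∈ Icc 1 N, ((#n.primeFactors : ℝ) - log (log N)) ^ 2
      ≤ N * ((primeReciprocalSum N - log (log N)) ^ 2 + primeReciprocalSum N) +
          2 * (log (log N) * Nat.primeCounting N) := sum_card_primeFactors_sub_sq_le N hloglog
    _ ≤ N * (c ^ 2 + (log (log N) + c)) + 2 * (6 * N) := by gcongr
    _ = N * (log (log N) + (c ^ 2 + c + 12)) := by ring

lemma card_filter_le_abs_mul_sq_le_sum_sq {ι : Type*} (s : Finset ι) (f : ι → ℝ) {a : ℝ}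
    (ha : 0 ≤ a) : #{i ∈ s | a ≤ |f i|} * a ^ 2 ≤ ∑ i ∈ s, f i ^ 2 := by
  calc #{i ∈ s | a ≤ |f i|} * a ^ 2 ≤ ∑ i ∈ s with a ≤ |f i|, f i ^ 2 := by
        rw [← nsmul_eq_mul]
        refine card_nsmul_le_sum _ _ _ fun i hi ↦ ?_
        rw [← sq_abs (f i)]
        exact pow_le_pow_left₀ ha (mem_filter.1 hi).2 2
    _ ≤ ∑ i ∈ s, f i ^ 2 :=
        sum_le_sum_of_subset_of_nonneg (filter_subset _ _) fun _ _ _ ↦ sq_nonneg _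

theorem turan_hardy_ramanujan_general :
    ∃ C : ℝ, 0 < C ∧ ∀ N : ℕ, 3 ≤ N → ∀ t : ℝ, 0 < t →
      (#{n ∈ Icc 1 N | t * √(log (log N)) ≤ |(#n.primeFactors : ℝ) - log (log N)|} : ℝ) / N
        ≤ (1 + C / log (log N)) / t ^ 2 := by
  obtain ⟨C, hC, hvariance⟩ := exists_sum_card_primeFactors_sub_log_log_sq_le
  refine ⟨C, hC, fun N hN t ht ↦ ?_⟩
  have hloglog : 0 < log (log N) := log_log_pos (mod_cast hN)
  have hN0 : (0 : ℝ) < N := by positivity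
  have htail := (card_filter_le_abs_mul_sq_le_sum_sq (Icc 1 N)
    (fun n ↦ (#n.primeFactors : ℝ) - log (log N))
    (by positivity : 0 ≤ t * √(log (log N)))).trans (hvariance N hN)
  rw [mul_pow, sq_sqrt hloglog.le] at htail
  rw [one_add_div hloglog.ne', div_div, div_le_div_iff₀ hN0 (by positivity)]
  linarith

theorem turan_hardy_ramanujan :
    ∃ C : ℝ, 0 < C ∧ ∀ N : ℕ, 16 ≤ N → ∀ t : ℝ, 1 ≤ t →
      (((Finset.Icc 1 N).filter (fun n =>
          t * Real.sqrt (Real.log (Real.log N)) ≤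
            |(n.primeFactors.card : ℝ) - Real.log (Real.log N)|)).card : ℝ) / N
        ≤ (1 + C / Real.sqrt (Real.log (Real.log N))) / t ^ 2 := by
  obtain ⟨C, hC, htail⟩ := turan_hardy_ramanujan_general
  refine ⟨C, hC, fun N hN t ht ↦ (htail N (by lia) t (by linarith)).trans ?_⟩
  have hloglog : 1 ≤ log (log N) := one_le_log_log (mod_cast hN)
  gcongr
  exact sqrt_le_self_iff.2 (.inr hloglog)
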